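/- For every J ⊆ 𝒥 with |J| ≤ M, there is a constant C depending only on m and K such that the empirical-norm metric entropy of the normalized class H(J) satisfies H(u, H(J), ‖·‖_n) ≤ C u^{−2/m} for all u ∈ (0,1). -/

import Mathlib

open MeasureTheory ProbabilityTheory

noncomputable section

namespace Census

/-- Additive representation indexed by `{(j,k) : j ≤ k}`: `main j` is the (univariate)
diagonal component for `(j,j)`, `inter j k` the bivariate component for `j < k`;
all components are `m`-times continuously differentiable. -/
structure AddRepM (p m : ℕ) where
  main : Fin p → ℝ → ℝ
  inter : Fin p → Fin p → ℝ → ℝ → ℝ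
  smooth_main : ∀ j, ContDiff ℝ (m : ℕ∞) (main j)
  smooth_inter : ∀ j k, ContDiff ℝ (m : ℕ∞) (fun q : ℝ × ℝ => inter j k q.1 q.2)

namespace AddRepM
variable {p m : ℕ}

def toFun (R : AddRepM p m) (x : Fin p → ℝ) : ℝ :=
  (∑ j, R.main j (x j)) + ∑ j, ∑ k, if j < k then R.inter j k (x j) (x k) else 0

def Gcount (R : AddRepM p m) : ℕ :=
  Nat.card {j : Fin p // R.main j ≠ 0} +
    Nat.card {q : Fin p × Fin p // q.1 < q.2 ∧ R.inter q.1 q.2 ≠ 0}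

end AddRepM

/-- Mixed partial derivative `∂^{a+b} g / ∂u^a ∂v^b`. -/
def pd (a b : ℕ) (g : ℝ → ℝ → ℝ) (u v : ℝ) : ℝ :=
  iteratedDeriv a (fun t => iteratedDeriv b (g t) v) u

/-- `m`-th order smoothness penalty of a univariate component. -/
def Omega1M (m : ℕ) (h : ℝ → ℝ) : ℝ := ∫ u in (0:ℝ)..1, (iteratedDeriv m h u) ^ 2

/-- `m`-th order smoothness penalty of a bivariate component:
`Σ_{a+b=m} ‖∂^m g/∂u^a ∂v^b‖²_{L²([0,1]²)}`. -/
def Omega2M (m : ℕ) (g : ℝ → ℝ → ℝ) : ℝ :=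
  ∑ a ∈ Finset.range (m + 1),
    ∫ q in (Set.Icc (0:ℝ) 1) ×ˢ (Set.Icc (0:ℝ) 1), (pd a (m - a) g q.1 q.2) ^ 2

def OmegaGrM {p m : ℕ} (R : AddRepM p m) : ℝ :=
  (∑ j, Omega1M m (R.main j)) + ∑ j, ∑ k, if j < k then Omega2M m (R.inter j k) else 0

def OmegaTildeGrM {p m : ℕ} (R : AddRepM p m) : ℝ :=
  (∑ j, Real.sqrt (Omega1M m (R.main j))) +
    ∑ j, ∑ k, if j < k then Real.sqrt (Omega2M m (R.inter j k)) else 0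

def evalVecM {n p m : ℕ} (x : Fin n → Fin p → ℝ) (R : AddRepM p m) : Fin n → ℝ :=
  fun i => R.toFun (x i)

def normSqN {n : ℕ} (v : Fin n → ℝ) : ℝ := (1 / n) * ∑ i, v i ^ 2

def normN {n : ℕ} (v : Fin n → ℝ) : ℝ := Real.sqrt (normSqN v)

def innerN {n : ℕ} (u v : Fin n → ℝ) : ℝ := (1 / n) * ∑ i, u i * v i

def objectiveM {n p m : ℕ} (x : Fin n → Fin p → ℝ) (y : Fin n → ℝ) (lam mu : ℝ)
    (R : AddRepM p m) : ℝ :=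
  normSqN (fun i => y i - evalVecM x R i) + lam * OmegaGrM R + mu * (R.Gcount : ℝ)

def IsMinimizerM {n p m : ℕ} (K : ℕ) (x : Fin n → Fin p → ℝ) (y : Fin n → ℝ)
    (lam mu : ℝ) (Rhat : AddRepM p m) : Prop :=
  Rhat.Gcount ≤ K ∧ ∀ R : AddRepM p m, R.Gcount ≤ K →
    objectiveM x y lam mu Rhat ≤ objectiveM x y lam mu R

/-- Critical rate `rₙ = n^{-m/(2m+2)}`. -/
def rnM (m n : ℕ) : ℝ := (n : ℝ) ^ (-(m : ℝ) / (2 * m + 2))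

def logep (p : ℕ) : ℝ := Real.log (Real.exp 1 * p)

def gaussMeasure (n : ℕ) (σ : ℝ) : Measure (Fin n → ℝ) :=
  Measure.pi fun _ : Fin n => gaussianReal 0 ⟨σ ^ 2, sq_nonneg σ⟩

/-- Membership of a representation's support in the index set `J ⊆ 𝒥`. -/
def SuppIn {p m : ℕ} (R : AddRepM p m) (J : Finset (Fin p × Fin p)) : Prop :=
  (∀ j, R.main j ≠ 0 → (j, j) ∈ J) ∧
    (∀ j k, R.inter j k ≠ (0 : ℝ → ℝ → ℝ) → j < k ∧ (j, k) ∈ J)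

/-!
The proof is the piecewise-polynomial approximation argument of Birman and Solomyak. On a square of
side `δ`, a function of two variables is within a multiple of `δ ^ (m - 1) * √energy` of a
polynomial, where the energy is the part of `Ω` carried by the square. Starting from the grid of
`4 ^ L` squares, subdivide dyadically every square for which the number of design points times
`δ ^ (2 * (m - 1))` is above a threshold. The partition depends on the design only, has of order
`4 ^ L` squares, and its piecewise polynomials approximate in the empirical norm with error of
order `2 ^ (-L * m)`, because the energies of the squares add up. Thus the class is approximated by
linear spaces of dimension `D` with error of order `D ^ (-m / 2)`, and a telescoping covering
argument in the spirit of Carl's inequality turns this into the entropy bound `u ^ (-2 / m)`.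
-/

section Covering

open Metric

variable {E : Type*} [NormedAddCommGroup E] [NormedSpace ℝ E]

theorem packingNumber_one_closedBall_two_le [FiniteDimensional ℝ E] :
    packingNumber 1 (closedBall (0 : E) 2) ≤ 5 ^ Module.finrank ℝ E := by
  refine iSup₂_le fun C hC => iSup_le fun hsep => ?_
  by_contra! hcard
  obtain ⟨s, hsC, hs⟩ := Set.exists_subset_encard_eq (Order.add_one_le_of_lt hcard)
  have hfin : s.Finite := Set.finite_of_encard_eq_coe (k := 5 ^ Module.finrank ℝ E + 1) (by simpa)
  lift s to Finset E using hfin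
  have hle := Besicovitch.card_le_of_separated s (fun c hc => by simpa using hC (hsC hc))
    fun c hc d hd hcd => by
      have hlt : (1 : NNReal) < edist c d := hsep (hsC hc) (hsC hd) hcd
      rw [edist_dist, ENNReal.coe_one, ENNReal.one_lt_ofReal, dist_eq_norm] at hlt
      exact hlt.le
  rw [Set.encard_coe_eq_coe_finsetCard] at hs
  norm_cast at hs
  omega

theorem exists_finset_cover_closedBall_two [FiniteDimensional ℝ E] :
    ∃ T : Finset E, T.card ≤ 5 ^ Module.finrank ℝ E ∧
      ∀ v : E, ‖v‖ ≤ 2 → ∃ t ∈ T, ‖v - t‖ ≤ 1 := by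
  have hle := packingNumber_one_closedBall_two_le (E := E)
  have hne : packingNumber 1 (closedBall (0 : E) 2) ≠ ⊤ :=
    ne_top_of_le_ne_top (by exact_mod_cast ENat.natCast_ne_top (5 ^ Module.finrank ℝ E)) hle
  rw [← encard_maximalSeparatedSet hne] at hle
  have hfin : (maximalSeparatedSet 1 (closedBall (0 : E) 2)).Finite :=
    Set.finite_of_encard_le_coe (k := 5 ^ Module.finrank ℝ E) (by simpa)
  refine ⟨hfin.toFinset, ?_, fun v hv => ?_⟩
  · rw [hfin.encard_eq_coe_toFinset_card] at hle
    exact_mod_cast hle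
  · obtain ⟨t, ht, hvt⟩ := isCover_maximalSeparatedSet hne (mem_closedBall_zero_iff.2 hv)
    refine ⟨t, hfin.mem_toFinset.2 ht, ?_⟩
    rw [← dist_eq_norm, ← ENNReal.ofReal_le_one, ← edist_dist]
    exact hvt

theorem exists_finset_cover_closedBall_two_pow_mul [FiniteDimensional ℝ E] {R : ℝ} (hR : 0 < R)
    (j : ℕ) :
    ∃ T : Finset E, T.card ≤ 5 ^ (j * Module.finrank ℝ E) ∧
      ∀ v : E, ‖v‖ ≤ 2 ^ j * R → ∃ t ∈ T, ‖v - t‖ ≤ R := by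
  classical
  induction j with
  | zero => exact ⟨{0}, by simp, fun v hv => ⟨0, by simp, by simpa using hv⟩⟩
  | succ j ih =>
    obtain ⟨T, hT, hcover⟩ := ih
    obtain ⟨T₁, hT₁, hcover₁⟩ := exists_finset_cover_closedBall_two (E := E)
    set ρ : ℝ := 2 ^ j * R
    have hρ : 0 < ρ := by positivity
    refine ⟨(T₁ ×ˢ T).image fun q => ρ • q.1 + q.2, ?_, fun v hv => ?_⟩
    · calc _ ≤ T₁.card * T.card := Finset.card_image_le.trans_eq (Finset.card_product T₁ T)
        _ ≤ 5 ^ Module.finrank ℝ E * 5 ^ (j * Module.finrank ℝ E) := Nat.mul_le_mul hT₁ hT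
        _ = _ := by rw [← pow_add]; congr 1; ring
    obtain ⟨t₁, ht₁, hvt₁⟩ := hcover₁ (ρ⁻¹ • v) (by
      rw [norm_smul, norm_inv, Real.norm_of_nonneg hρ.le, inv_mul_le_iff₀ hρ]
      exact hv.trans_eq (by ring))
    have hrem : ‖v - ρ • t₁‖ ≤ ρ := by
      calc ‖v - ρ • t₁‖ = ‖ρ • (ρ⁻¹ • v - t₁)‖ := by rw [smul_sub, smul_inv_smul₀ hρ.ne']
        _ = ρ * ‖ρ⁻¹ • v - t₁‖ := by rw [norm_smul, Real.norm_of_nonneg hρ.le]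
        _ ≤ ρ := mul_le_of_le_one_right hρ.le hvt₁
    obtain ⟨t, ht, hvt⟩ := hcover _ hrem
    refine ⟨_, Finset.mem_image_of_mem _ (Finset.mk_mem_product ht₁ ht), ?_⟩
    rwa [← sub_sub]

theorem exists_finset_cover_submodule_near (V : Submodule ℝ E) [FiniteDimensional ℝ V] (w : E)
    {R : ℝ} (hR : 0 < R) (j : ℕ) :
    ∃ T : Finset E, T.card ≤ 5 ^ ((j + 1) * Module.finrank ℝ V) ∧
      ∀ v ∈ V, ‖v - w‖ ≤ 2 ^ j * R → ∃ t ∈ T, ‖v - t‖ ≤ R := by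
  classical
  by_cases hnear : ∃ v ∈ V, ‖v - w‖ ≤ 2 ^ j * R
  · obtain ⟨v₀, hv₀, hv₀w⟩ := hnear
    obtain ⟨T, hT, hcover⟩ := exists_finset_cover_closedBall_two_pow_mul (E := V) hR (j + 1)
    refine ⟨T.image fun t : V => v₀ + (t : E), Finset.card_image_le.trans hT, fun v hv hvw => ?_⟩
    have hdist : ‖v - v₀‖ ≤ 2 ^ (j + 1) * R := by
      calc ‖v - v₀‖ = ‖(v - w) - (v₀ - w)‖ := by rw [sub_sub_sub_cancel_right]
        _ ≤ 2 ^ j * R + 2 ^ j * R := norm_sub_le_of_le hvw hv₀w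
        _ = _ := by ring
    obtain ⟨t, ht, hvt⟩ := hcover (⟨v, hv⟩ - ⟨v₀, hv₀⟩) hdist
    refine ⟨v₀ + t, Finset.mem_image_of_mem _ ht, ?_⟩
    rw [← sub_sub]
    exact hvt
  · push Not at hnear
    exact ⟨∅, by simp, fun v hv hvw => absurd hvw (hnear v hv).not_ge⟩

/-- One step of Carl's argument: the approximants of the points of `H` near a given centre lie in a
ball of the subspace `V`, which is covered at the smaller scale. -/
theorem exists_finset_cover_refine {H : Set E} {V : Submodule ℝ E} [FiniteDimensional ℝ V]
    {T : Finset E} {R : ℝ} {m : ℕ} (hR : 0 < R)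
    (hT : ∀ h ∈ H, ∃ t ∈ T, ‖h - t‖ ≤ 2 ^ (m + 1) * R) (hV : ∀ h ∈ H, ∃ v ∈ V, ‖h - v‖ ≤ R) :
    ∃ T' : Finset E, T'.card ≤ T.card * 5 ^ ((m + 3) * Module.finrank ℝ V) ∧
      ∀ h ∈ H, ∃ t ∈ T', ‖h - t‖ ≤ 2 * R := by
  classical
  choose F hFcard hFcover using fun w : E => exists_finset_cover_submodule_near V w hR (m + 2)
  refine ⟨T.biUnion F, Finset.card_biUnion_le_card_mul _ _ _ fun w _ => hFcard w, fun h hh => ?_⟩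
  obtain ⟨w, hw, hhw⟩ := hT h hh
  obtain ⟨v, hv, hhv⟩ := hV h hh
  have hvw : ‖v - w‖ ≤ 2 ^ (m + 2) * R := by
    calc ‖v - w‖ = ‖(h - w) - (h - v)‖ := by rw [sub_sub_sub_cancel_left]
      _ ≤ 2 ^ (m + 1) * R + 1 * R := norm_sub_le_of_le hhw (by rwa [one_mul])
      _ ≤ 2 ^ (m + 1) * R + 2 ^ (m + 1) * R := by gcongr; exact one_le_pow₀ one_le_two
      _ = _ := by ring
  obtain ⟨t, ht, hvt⟩ := hFcover w v hv hvw
  refine ⟨t, Finset.mem_biUnion.2 ⟨w, hw, ht⟩, ?_⟩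
  calc ‖h - t‖ ≤ R + R := norm_sub_le_norm_sub_add_norm_sub h v t |>.trans (add_le_add hhv hvt)
    _ = 2 * R := by ring

theorem exists_finset_cover_of_approximation {H : Set E} {A : ℝ} {m : ℕ} (V : ℕ → Submodule ℝ E)
    [∀ k, FiniteDimensional ℝ (V k)] (hA : 1 ≤ A) (hH : ∀ h ∈ H, ‖h‖ ≤ 1)
    (happrox : ∀ k, ∀ h ∈ H, ∃ v ∈ V k, ‖h - v‖ ≤ A / 2 ^ (k * m)) (k : ℕ) :
    ∃ T : Finset E, T.card ≤ 5 ^ ((m + 3) * ∑ i ∈ Finset.range k, Module.finrank ℝ (V (i + 1))) ∧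
      ∀ h ∈ H, ∃ t ∈ T, ‖h - t‖ ≤ 2 * (A / 2 ^ (k * m)) := by
  induction k with
  | zero =>
    exact ⟨{0}, by simp, fun h hh => ⟨0, by simp, by simpa using (hH h hh).trans (by linarith)⟩⟩
  | succ k ih =>
    obtain ⟨T, hT, hcover⟩ := ih
    have hscale : 2 * (A / 2 ^ (k * m)) = 2 ^ (m + 1) * (A / 2 ^ ((k + 1) * m)) := by
      rw [add_mul, one_mul, pow_add, pow_succ]
      field_simp
      rw [pow_add]
    rw [hscale] at hcover
    obtain ⟨T', hT', hcover'⟩ :=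
      exists_finset_cover_refine (by positivity) hcover (happrox (k + 1))
    refine ⟨T', hT'.trans ?_, hcover'⟩
    rw [Finset.sum_range_succ, mul_add, pow_add]
    exact Nat.mul_le_mul_right _ hT

theorem sum_range_two_pow_mul_succ_le {d : ℕ} (hd : d ≠ 0) (k : ℕ) :
    ∑ i ∈ Finset.range k, 2 ^ (d * (i + 1)) ≤ 2 * 2 ^ (d * k) := by
  induction k with
  | zero => simp
  | succ k ih =>
    have hstep : 2 * 2 ^ (d * k) ≤ 2 ^ (d * (k + 1)) := by
      rw [← pow_succ']
      exact Nat.pow_le_pow_right two_pos (by rw [mul_add]; omega)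
    rw [Finset.sum_range_succ]
    omega

theorem exists_two_pow_mul_ge {d m : ℕ} (hm : m ≠ 0) {x : ℝ} (hx : 1 ≤ x) :
    ∃ k : ℕ, x ≤ 2 ^ (k * m) ∧ (2 : ℝ) ^ (d * k) ≤ 2 ^ d * x ^ ((d : ℝ) / m) := by
  obtain ⟨k, hle, hlt⟩ := exists_nat_pow_near hx (one_lt_pow₀ (one_lt_two (α := ℝ)) hm)
  refine ⟨k + 1, hlt.le.trans_eq (by rw [← pow_mul, mul_comm]), ?_⟩
  have hpow : (2 : ℝ) ^ (d * k) = ((2 ^ m) ^ k) ^ ((d : ℝ) / m) := by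
    rw [← pow_mul, ← Real.rpow_natCast 2 (m * k), ← Real.rpow_mul two_pos.le, ← Real.rpow_natCast]
    congr 1
    push_cast
    field_simp
  rw [mul_add, mul_one, pow_add, mul_comm, hpow]
  gcongr

theorem exists_finset_cover_log_card_le {H : Set E} {A : ℝ} {d m N : ℕ} (hd : d ≠ 0) (hm : m ≠ 0)
    (V : ℕ → Submodule ℝ E) [∀ k, FiniteDimensional ℝ (V k)]
    (hN : ∀ k, Module.finrank ℝ (V k) ≤ N * 2 ^ (d * k)) (hA : 1 ≤ A) (hH : ∀ h ∈ H, ‖h‖ ≤ 1)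
    (happrox : ∀ k, ∀ h ∈ H, ∃ v ∈ V k, ‖h - v‖ ≤ A / 2 ^ (k * m))
    {u : ℝ} (hu : 0 < u) (hu₁ : u ≤ 1) :
    ∃ T : Finset E, (∀ h ∈ H, ∃ t ∈ T, ‖h - t‖ ≤ u) ∧
      Real.log T.card ≤ 2 * (m + 3) * N * Real.log 5 * 2 ^ d * (2 * A) ^ ((d : ℝ) / m) *
        u ^ (-(d : ℝ) / m) := by
  obtain ⟨k, hk, hkd⟩ := exists_two_pow_mul_ge (d := d) hm (x := 2 * A / u)
    (by rw [le_div_iff₀ hu]; linarith)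
  obtain ⟨T, hT, hcover⟩ := exists_finset_cover_of_approximation V hA hH happrox k
  refine ⟨T, fun h hh => ?_, ?_⟩
  · obtain ⟨t, ht, hht⟩ := hcover h hh
    refine ⟨t, ht, hht.trans ?_⟩
    rw [div_le_iff₀ hu] at hk
    rw [← mul_div_assoc, div_le_iff₀ (by positivity)]
    linarith
  have hsum : ∑ i ∈ Finset.range k, Module.finrank ℝ (V (i + 1)) ≤ N * (2 * 2 ^ (d * k)) := by
    refine (Finset.sum_le_sum fun i _ => hN (i + 1)).trans ?_
    rw [← Finset.mul_sum]
    exact Nat.mul_le_mul_left _ (sum_range_two_pow_mul_succ_le hd k)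
  have hcard : (T.card : ℝ) ≤ 5 ^ ((m + 3) * (N * (2 * 2 ^ (d * k)))) := by
    exact_mod_cast hT.trans (Nat.pow_le_pow_right (by simp) (Nat.mul_le_mul_left _ hsum))
  calc Real.log T.card ≤ Real.log (5 ^ ((m + 3) * (N * (2 * 2 ^ (d * k))))) := by
        rcases T.eq_empty_or_nonempty with rfl | hne
        · simpa only [Finset.card_empty, Nat.cast_zero, Real.log_zero] using
            Real.log_nonneg (one_le_pow₀ (by norm_num : (1 : ℝ) ≤ 5))
        · exact Real.log_le_log (by exact_mod_cast hne.card_pos) hcard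
    _ = 2 * (m + 3) * N * Real.log 5 * 2 ^ (d * k) := by rw [Real.log_pow]; push_cast; ring
    _ ≤ 2 * (m + 3) * N * Real.log 5 * (2 ^ d * (2 * A / u) ^ ((d : ℝ) / m)) := by gcongr
    _ = _ := by
        rw [Real.div_rpow (by positivity) hu.le, neg_div, Real.rpow_neg hu.le]
        ring

end Covering

section IntervalIntegral

theorem abs_sub_le_integral_abs_deriv {φ φ' : ℝ → ℝ} (hφ : ∀ s, HasDerivAt φ (φ' s) s)
    (hφ' : Continuous φ') {a b s t : ℝ} (hs : s ∈ Set.Icc a b) (ht : t ∈ Set.Icc a b) :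
    |φ s - φ t| ≤ ∫ r in a..b, |φ' r| := by
  wlog hts : t ≤ s generalizing s t
  · rw [abs_sub_comm]
    exact this ht hs (le_of_not_ge hts)
  calc |φ s - φ t| = |∫ r in t..s, φ' r| := by
        rw [intervalIntegral.integral_eq_sub_of_hasDerivAt (fun x _ => hφ x)
          (hφ'.intervalIntegrable _ _)]
    _ ≤ ∫ r in t..s, |φ' r| := intervalIntegral.abs_integral_le_integral_abs hts
    _ ≤ ∫ r in a..b, |φ' r| := intervalIntegral.integral_mono_interval ht.1 hts hs.2
        (.of_forall fun _ => abs_nonneg _) (hφ'.abs.intervalIntegrable _ _)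

theorem abs_sub_sub_deriv_mul_le {φ φ' φ'' : ℝ → ℝ} (hφ : ∀ s, HasDerivAt φ (φ' s) s)
    (hφ' : ∀ s, HasDerivAt φ' (φ'' s) s) (hφ'' : Continuous φ'') {a b s t : ℝ}
    (hs : s ∈ Set.Icc a b) (ht : t ∈ Set.Icc a b) :
    |φ s - φ t - φ' t * (s - t)| ≤ (∫ r in a..b, |φ'' r|) * (b - a) := by
  have hbound := (convex_Icc a b).norm_image_sub_le_of_norm_hasDerivWithin_le
    (f := fun r => φ r - φ' t * r) (f' := fun r => φ' r - φ' t)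
    (fun r _ => by
      simpa using ((hφ r).fun_sub ((hasDerivAt_id r).const_mul (φ' t))).hasDerivWithinAt)
    (fun r hr => abs_sub_le_integral_abs_deriv hφ' hφ'' hr ht) ht hs
  have hlen : ‖s - t‖ ≤ b - a := Real.dist_le_of_mem_Icc hs ht
  have hnonneg : 0 ≤ ∫ r in a..b, |φ'' r| :=
    intervalIntegral.integral_nonneg (hs.1.trans hs.2) fun _ _ => abs_nonneg _
  calc |φ s - φ t - φ' t * (s - t)| = ‖φ s - φ' t * s - (φ t - φ' t * t)‖ := by
        rw [Real.norm_eq_abs]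
        ring_nf
    _ ≤ _ := hbound.trans (mul_le_mul_of_nonneg_left hlen hnonneg)

theorem exists_mul_eq_integral {f : ℝ → ℝ} (hf : Continuous f) {a b : ℝ} (hab : a < b) :
    ∃ c ∈ Set.Icc a b, f c * (b - a) = ∫ x in a..b, f x := by
  obtain ⟨c, hc, hfc⟩ := exists_eq_interval_average hab.ne hf.continuousOn
  rw [Set.uIoo_of_lt hab] at hc
  refine ⟨c, Set.Ioo_subset_Icc_self hc, ?_⟩
  rw [hfc, interval_average_eq_div, div_mul_cancel₀ _ (sub_pos.2 hab).ne']

theorem sq_integral_le_mul_integral_sq {f : ℝ → ℝ} (hf : Continuous f) {a b : ℝ} (hab : a ≤ b) :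
    (∫ x in a..b, f x) ^ 2 ≤ (b - a) * ∫ x in a..b, f x ^ 2 := by
  rcases hab.eq_or_lt with rfl | hlt
  · simp
  have hint : ∀ {g : ℝ → ℝ}, Continuous g → IntegrableOn g (Set.uIoc a b) := fun hg =>
    intervalIntegrable_iff.1 (hg.intervalIntegrable a b)
  have hjensen : (⨍ x in a..b, f x) ^ 2 ≤ ⨍ x in a..b, f x ^ 2 :=
    (even_two.convexOn_pow (𝕜 := ℝ)).map_set_average_le (by fun_prop) isClosed_univ
      (by simpa [Set.uIoc_of_le hab] using hlt) (by simp) (by simp) (hint hf) (hint (hf.pow 2))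
  have hpos : 0 < b - a := sub_pos.2 hlt
  rw [interval_average_eq_div, interval_average_eq_div, div_pow, div_le_iff₀ (by positivity)]
    at hjensen
  exact hjensen.trans_eq (by field_simp)

theorem integral_eq_sum_halves {f : ℝ → ℝ} (hf : Continuous f) (a δ : ℝ) :
    ∫ x in a..a + δ, f x =
      ∑ i : Fin 2, ∫ x in a + i * (δ / 2)..a + i * (δ / 2) + δ / 2, f x := by
  have hadj := intervalIntegral.integral_add_adjacent_intervals
    (hf.intervalIntegrable (μ := volume) a (a + δ / 2)) (hf.intervalIntegrable _ (a + δ))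
  rw [← hadj, Fin.sum_univ_two]
  simp [add_assoc]

theorem exists_mem_half {a δ x : ℝ} (hx : x ∈ Set.Icc a (a + δ)) :
    ∃ i : Fin 2, x ∈ Set.Icc (a + i * (δ / 2)) (a + i * (δ / 2) + δ / 2) := by
  rcases le_total x (a + δ / 2) with h | h
  · exact ⟨0, by simpa using ⟨hx.1, h⟩⟩
  · exact ⟨1, by simpa [add_assoc] using ⟨h, hx.2⟩⟩

end IntervalIntegral

section SquareIntegral

/-- The iterated integral of `F` over the square `[a, a + δ] × [b, b + δ]`. -/
def squareIntegral (a b δ : ℝ) (F : ℝ → ℝ → ℝ) : ℝ :=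
  ∫ u in a..a + δ, ∫ v in b..b + δ, F u v

variable {F : ℝ → ℝ → ℝ} {a b δ : ℝ}

theorem continuous_integral_right (hF : Continuous (Function.uncurry F)) (c d : ℝ) :
    Continuous fun u => ∫ v in c..d, F u v :=
  intervalIntegral.continuous_parametric_intervalIntegral_of_continuous' hF c d

theorem continuous_uncurry_swap (hF : Continuous (Function.uncurry F)) :
    Continuous (Function.uncurry fun v u => F u v) :=
  hF.comp continuous_swap

theorem squareIntegral_swap (hF : Continuous (Function.uncurry F)) :
    squareIntegral a b δ F = ∫ v in b..b + δ, ∫ u in a..a + δ, F u v := by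
  refine intervalIntegral_intervalIntegral_swap ?_
  exact (hF.continuousOn.integrableOn_compact (isCompact_uIcc.prod isCompact_uIcc)).mono_set
    (Set.prod_mono Set.uIoc_subset_uIcc Set.uIoc_subset_uIcc)

theorem squareIntegral_nonneg (hδ : 0 ≤ δ) (hF : ∀ u v, 0 ≤ F u v) :
    0 ≤ squareIntegral a b δ F :=
  intervalIntegral.integral_nonneg (by linarith) fun u _ =>
    intervalIntegral.integral_nonneg (by linarith) fun v _ => hF u v

theorem squareIntegral_eq_sum_quadrants (hF : Continuous (Function.uncurry F)) :
    squareIntegral a b δ F = ∑ q : Fin 2 × Fin 2,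
      squareIntegral (a + q.1 * (δ / 2)) (b + q.2 * (δ / 2)) (δ / 2) F := by
  simp only [squareIntegral]
  rw [integral_eq_sum_halves (continuous_integral_right hF _ _), Fintype.sum_prod_type]
  refine Finset.sum_congr rfl fun i _ => ?_
  simp only [fun u => integral_eq_sum_halves (hF.uncurry_left u) b δ]
  exact intervalIntegral.integral_finsetSum fun j _ =>
    (continuous_integral_right hF _ _).intervalIntegrable _ _

theorem sq_squareIntegral_le (hF : Continuous (Function.uncurry F)) (hδ : 0 ≤ δ) :
    squareIntegral a b δ F ^ 2 ≤ δ ^ 2 * squareIntegral a b δ fun u v => F u v ^ 2 := by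
  have hinner := continuous_integral_right hF b (b + δ)
  have hF₂ : Continuous (Function.uncurry fun u v => F u v ^ 2) := hF.pow 2
  calc squareIntegral a b δ F ^ 2
      ≤ δ * ∫ u in a..a + δ, (∫ v in b..b + δ, F u v) ^ 2 := by
        simpa [squareIntegral] using
          sq_integral_le_mul_integral_sq hinner (le_add_of_nonneg_right (a := a) hδ)
    _ ≤ δ * ∫ u in a..a + δ, δ * ∫ v in b..b + δ, F u v ^ 2 := by
        refine mul_le_mul_of_nonneg_left (intervalIntegral.integral_mono_on (by linarith)
          ((hinner.pow 2).intervalIntegrable _ _)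
          (((continuous_integral_right hF₂ _ _).const_mul δ).intervalIntegrable _ _)
          fun u _ => ?_) hδ
        simpa using sq_integral_le_mul_integral_sq (hF.uncurry_left u)
          (le_add_of_nonneg_right (a := b) hδ)
    _ = _ := by rw [intervalIntegral.integral_const_mul, squareIntegral]; ring

theorem setIntegral_unitSquare_eq (hF : Continuous (Function.uncurry F)) :
    ∫ q in Set.Icc (0 : ℝ) 1 ×ˢ Set.Icc (0 : ℝ) 1, F q.1 q.2 = squareIntegral 0 0 1 F := by
  have hint : IntegrableOn (Function.uncurry F) (Set.Icc (0 : ℝ) 1 ×ˢ Set.Icc (0 : ℝ) 1)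
      (volume.prod volume) :=
    hF.continuousOn.integrableOn_compact (isCompact_Icc.prod isCompact_Icc)
  refine (setIntegral_prod _ hint).trans ?_
  simp only [squareIntegral, zero_add, intervalIntegral.integral_of_le zero_le_one,
    ← integral_Icc_eq_integral_Ioc]
  rfl

end SquareIntegral

section MixedDerivatives

/-- `D k l`, for `k + l ≤ m`, is the continuous mixed derivative `∂^(k+l) F / ∂u^k ∂v^l` of
`F = D 0 0`. Keeping the whole family as data makes the derivatives of `F` families of order
`m - 1` by shifting indices. -/
structure IsMixedDerivFamily (m : ℕ) (D : ℕ → ℕ → ℝ → ℝ → ℝ) : Prop where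
  continuous : ∀ {k l}, k + l ≤ m → Continuous (Function.uncurry (D k l))
  hasDerivAt_left : ∀ {k l}, k + l < m → ∀ u v,
    HasDerivAt (fun s => D k l s v) (D (k + 1) l u v) u
  hasDerivAt_right : ∀ {k l}, k + l < m → ∀ u v, HasDerivAt (D k l u) (D k (l + 1) u v) v

/-- The `L¹` norm over `[a, a + δ] × [b, b + δ]` of the derivatives of order `m`. -/
def absEnergy (m : ℕ) (a b δ : ℝ) (D : ℕ → ℕ → ℝ → ℝ → ℝ) : ℝ :=
  ∑ p ∈ Finset.HasAntidiagonal.antidiagonal m, squareIntegral a b δ fun u v => |D p.1 p.2 u v|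

/-- The squared `L²` norm over `[a, a + δ] × [b, b + δ]` of the derivatives of order `m`. -/
def energy (m : ℕ) (a b δ : ℝ) (D : ℕ → ℕ → ℝ → ℝ → ℝ) : ℝ :=
  ∑ p ∈ Finset.HasAntidiagonal.antidiagonal m, squareIntegral a b δ fun u v => D p.1 p.2 u v ^ 2

variable {m : ℕ} {D : ℕ → ℕ → ℝ → ℝ → ℝ} {a b δ : ℝ}

namespace IsMixedDerivFamily

theorem shift_left (hD : IsMixedDerivFamily (m + 1) D) :
    IsMixedDerivFamily m fun k l => D (k + 1) l where
  continuous h := hD.continuous (by omega)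
  hasDerivAt_left h := hD.hasDerivAt_left (by omega)
  hasDerivAt_right h := hD.hasDerivAt_right (by omega)

theorem shift_right (hD : IsMixedDerivFamily (m + 1) D) :
    IsMixedDerivFamily m fun k l => D k (l + 1) where
  continuous h := hD.continuous (by omega)
  hasDerivAt_left h := hD.hasDerivAt_left (by omega)
  hasDerivAt_right h := hD.hasDerivAt_right (by omega)

theorem continuous_left (hD : IsMixedDerivFamily m D) {k l : ℕ} (h : k + l ≤ m) (v : ℝ) :
    Continuous fun u => D k l u v :=
  (hD.continuous h).uncurry_right v

theorem continuous_right (hD : IsMixedDerivFamily m D) {k l : ℕ} (h : k + l ≤ m) (u : ℝ) :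
    Continuous (D k l u) :=
  (hD.continuous h).uncurry_left u

end IsMixedDerivFamily

theorem absEnergy_shift_left_le (hδ : 0 ≤ δ) :
    absEnergy m a b δ (fun k l => D (k + 1) l) ≤ absEnergy (m + 1) a b δ D := by
  rw [absEnergy, absEnergy, Finset.Nat.sum_antidiagonal_succ]
  exact le_add_of_nonneg_left (squareIntegral_nonneg hδ fun _ _ => abs_nonneg _)

theorem absEnergy_shift_right_le (hδ : 0 ≤ δ) :
    absEnergy m a b δ (fun k l => D k (l + 1)) ≤ absEnergy (m + 1) a b δ D := by
  rw [absEnergy, absEnergy, Finset.Nat.sum_antidiagonal_succ']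
  exact le_add_of_nonneg_left (squareIntegral_nonneg hδ fun _ _ => abs_nonneg _)

theorem energy_nonneg (hδ : 0 ≤ δ) : 0 ≤ energy m a b δ D :=
  Finset.sum_nonneg fun _ _ => squareIntegral_nonneg hδ fun _ _ => sq_nonneg _

theorem sq_absEnergy_le (hD : IsMixedDerivFamily m D) (hδ : 0 ≤ δ) :
    absEnergy m a b δ D ^ 2 ≤ (m + 1) * δ ^ 2 * energy m a b δ D := by
  rw [absEnergy]
  refine sq_sum_le_card_mul_sum_sq.trans ?_
  rw [Finset.Nat.card_antidiagonal, Nat.cast_add_one, mul_assoc, energy,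
    Finset.mul_sum _ _ (δ ^ 2)]
  refine mul_le_mul_of_nonneg_left (Finset.sum_le_sum fun p hp => ?_) (by positivity)
  have hcont : Continuous (Function.uncurry fun u v => |D p.1 p.2 u v|) :=
    (hD.continuous (Finset.HasAntidiagonal.mem_antidiagonal.1 hp).le).abs
  simpa only [sq_abs] using sq_squareIntegral_le (a := a) (b := b) hcont hδ

theorem energy_eq_sum_quadrants (hD : IsMixedDerivFamily m D) :
    energy m a b δ D = ∑ q : Fin 2 × Fin 2,
      energy m (a + q.1 * (δ / 2)) (b + q.2 * (δ / 2)) (δ / 2) D := by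
  simp only [energy]
  rw [Finset.sum_comm]
  refine Finset.sum_congr rfl fun p hp => ?_
  have hcont : Continuous (Function.uncurry fun u v => D p.1 p.2 u v ^ 2) :=
    (hD.continuous (Finset.HasAntidiagonal.mem_antidiagonal.1 hp).le).pow 2
  exact squareIntegral_eq_sum_quadrants hcont

end MixedDerivatives

section TensorPolynomials

/-- Polynomial functions in two variables of degree less than `m` in each of them. -/
def tensorPoly (m : ℕ) : Submodule ℝ (ℝ → ℝ → ℝ) :=
  Submodule.span ℝ (Set.range fun e : Fin m × Fin m => fun u v => u ^ (e.1 : ℕ) * v ^ (e.2 : ℕ))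

instance (m : ℕ) : FiniteDimensional ℝ (tensorPoly m) :=
  FiniteDimensional.span_of_finite ℝ (Set.finite_range _)

theorem finrank_tensorPoly_le (m : ℕ) : Module.finrank ℝ (tensorPoly m) ≤ m ^ 2 := by
  simpa [sq] using! finrank_range_le_card (R := ℝ)
    fun e : Fin m × Fin m => fun u v : ℝ => u ^ (e.1 : ℕ) * v ^ (e.2 : ℕ)

variable {m : ℕ} {q : ℝ → ℝ → ℝ}

theorem const_mul_monomial_mem_tensorPoly (c : ℝ) {i j : ℕ} (hi : i < m) (hj : j < m) :
    (fun u v => c * (u ^ i * v ^ j)) ∈ tensorPoly m :=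
  (tensorPoly m).smul_mem c (Submodule.subset_span ⟨(⟨i, hi⟩, ⟨j, hj⟩), rfl⟩)

theorem const_mem_tensorPoly (hm : 0 < m) (c : ℝ) : (fun _ _ => c) ∈ tensorPoly m := by
  simpa using const_mul_monomial_mem_tensorPoly c hm hm

theorem continuous_uncurry_of_mem_tensorPoly (hq : q ∈ tensorPoly m) :
    Continuous (Function.uncurry q) := by
  induction hq using Submodule.span_induction with
  | mem q hq =>
    obtain ⟨e, rfl⟩ := hq
    exact (continuous_fst.pow _).mul (continuous_snd.pow _)
  | zero => exact continuous_const
  | add q₁ q₂ _ _ h₁ h₂ => exact h₁.add h₂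
  | smul c q _ h => exact h.const_smul c

theorem integral_right_mem_tensorPoly (b : ℝ) (hq : q ∈ tensorPoly m) :
    (fun u v => ∫ t in b..v, q u t) ∈ tensorPoly (m + 1) := by
  induction hq using Submodule.span_induction with
  | mem q hq =>
    obtain ⟨⟨i, j⟩, rfl⟩ := hq
    have htop := const_mul_monomial_mem_tensorPoly (m := m + 1) (1 / (j + 1 : ℝ))
      (show (i : ℕ) < m + 1 by omega) (show (j : ℕ) + 1 < m + 1 by omega)
    have hbot := const_mul_monomial_mem_tensorPoly (m := m + 1) (b ^ (j + 1 : ℕ) / (j + 1 : ℝ))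
      (show (i : ℕ) < m + 1 by omega) (show 0 < m + 1 by omega)
    convert (tensorPoly (m + 1)).sub_mem htop hbot using 3 with u v
    simp only [intervalIntegral.integral_const_mul, integral_pow, Pi.sub_apply]
    ring
  | zero =>
    convert (tensorPoly (m + 1)).zero_mem using 3 with u v
    exact intervalIntegral.integral_zero
  | add q₁ q₂ hq₁ hq₂ h₁ h₂ =>
    convert (tensorPoly (m + 1)).add_mem h₁ h₂ using 3 with u v
    exact intervalIntegral.integral_add
      ((continuous_uncurry_of_mem_tensorPoly hq₁).uncurry_left u |>.intervalIntegrable _ _)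
      ((continuous_uncurry_of_mem_tensorPoly hq₂).uncurry_left u |>.intervalIntegrable _ _)
  | smul c q _ h =>
    convert (tensorPoly (m + 1)).smul_mem c h using 3 with u v
    exact intervalIntegral.integral_const_mul c _

theorem integral_left_mem_tensorPoly (a b : ℝ) (hq : q ∈ tensorPoly m) :
    (fun u _ => ∫ s in a..u, q s b) ∈ tensorPoly (m + 1) := by
  induction hq using Submodule.span_induction with
  | mem q hq =>
    obtain ⟨⟨i, j⟩, rfl⟩ := hq
    have htop := const_mul_monomial_mem_tensorPoly (m := m + 1) (b ^ (j : ℕ) / (i + 1 : ℝ))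
      (show (i : ℕ) + 1 < m + 1 by omega) (show 0 < m + 1 by omega)
    have hbot := const_mem_tensorPoly m.succ_pos (a ^ (i + 1 : ℕ) * b ^ (j : ℕ) / (i + 1 : ℝ))
    convert (tensorPoly (m + 1)).sub_mem htop hbot using 3 with u v
    simp only [intervalIntegral.integral_mul_const, integral_pow, Pi.sub_apply]
    ring
  | zero =>
    convert (tensorPoly (m + 1)).zero_mem using 3 with u _
    exact intervalIntegral.integral_zero
  | add q₁ q₂ hq₁ hq₂ h₁ h₂ =>
    convert (tensorPoly (m + 1)).add_mem h₁ h₂ using 3 with u _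
    exact intervalIntegral.integral_add
      ((continuous_uncurry_of_mem_tensorPoly hq₁).uncurry_right b |>.intervalIntegrable _ _)
      ((continuous_uncurry_of_mem_tensorPoly hq₂).uncurry_right b |>.intervalIntegrable _ _)
  | smul c q _ h =>
    convert (tensorPoly (m + 1)).smul_mem c h using 3 with u _
    exact intervalIntegral.integral_const_mul c _

end TensorPolynomials

section LocalApproximation

theorem abs_sub_sub_integral_le {φ φ' ψ : ℝ → ℝ} (hφ : ∀ s, HasDerivAt φ (φ' s) s)
    (hφ' : Continuous φ') (hψ : Continuous ψ) {a b B t : ℝ}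
    (hB : ∀ s ∈ Set.Icc a b, |φ' s - ψ s| ≤ B) (ht : t ∈ Set.Icc a b) :
    |φ t - φ a - ∫ s in a..t, ψ s| ≤ B * (b - a) := by
  have hbound : ‖∫ s in a..t, φ' s - ψ s‖ ≤ B * |t - a| :=
    intervalIntegral.norm_integral_le_of_norm_le_const fun s hs => by
      rw [Set.uIoc_of_le ht.1] at hs
      exact hB s ⟨hs.1.le, hs.2.trans ht.2⟩
  have hB₀ : 0 ≤ B := (abs_nonneg _).trans (hB t ht)
  rw [intervalIntegral.integral_sub (hφ'.intervalIntegrable _ _) (hψ.intervalIntegrable _ _),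
    intervalIntegral.integral_eq_sub_of_hasDerivAt (fun s _ => hφ s)
      (hφ'.intervalIntegrable _ _), Real.norm_eq_abs, abs_of_nonneg (sub_nonneg.2 ht.1)] at hbound
  exact hbound.trans (mul_le_mul_of_nonneg_left (by linarith [ht.2]) hB₀)

variable {m : ℕ} {D : ℕ → ℕ → ℝ → ℝ → ℝ} {a b δ : ℝ}

theorem abs_mixedDifference_le (hD : IsMixedDerivFamily 2 D) (hδ : 0 ≤ δ) {u u₀ v v₀ : ℝ}
    (hu : u ∈ Set.Icc a (a + δ)) (hu₀ : u₀ ∈ Set.Icc a (a + δ))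
    (hv : v ∈ Set.Icc b (b + δ)) (hv₀ : v₀ ∈ Set.Icc b (b + δ)) :
    |(D 0 0 u v - D 0 0 u₀ v) - (D 0 0 u v₀ - D 0 0 u₀ v₀)| ≤
      squareIntegral a b δ fun u v => |D 1 1 u v| := by
  have hcont : Continuous fun t => D 0 1 u t - D 0 1 u₀ t :=
    (hD.continuous_right (by omega) u).sub (hD.continuous_right (by omega) u₀)
  have hcont₁₁ : Continuous (Function.uncurry fun u v => |D 1 1 u v|) :=
    (hD.continuous (by omega)).abs
  calc |(D 0 0 u v - D 0 0 u₀ v) - (D 0 0 u v₀ - D 0 0 u₀ v₀)|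
      ≤ ∫ t in b..b + δ, |D 0 1 u t - D 0 1 u₀ t| :=
        abs_sub_le_integral_abs_deriv (φ := fun t => D 0 0 u t - D 0 0 u₀ t)
          (fun t => (hD.hasDerivAt_right (by omega) u t).sub
            (hD.hasDerivAt_right (by omega) u₀ t)) hcont hv hv₀
    _ ≤ ∫ t in b..b + δ, ∫ s in a..a + δ, |D 1 1 s t| :=
        intervalIntegral.integral_mono_on (by linarith) (hcont.abs.intervalIntegrable _ _)
          ((continuous_integral_right (continuous_uncurry_swap hcont₁₁) _ _).intervalIntegrable
            _ _)
          fun t _ => abs_sub_le_integral_abs_deriv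
            (fun s => hD.hasDerivAt_left (by omega) s t) (hD.continuous_left (by omega) t) hu hu₀
    _ = _ := (squareIntegral_swap hcont₁₁).symm

/-- The expansion point is chosen on lines along which the pure second derivatives have average
integral, so that one-dimensional integrals are controlled by integrals over the square. -/
theorem exists_tensorPoly_two_approx (hD : IsMixedDerivFamily 2 D) (hδ : 0 < δ) :
    ∃ q ∈ tensorPoly 2, ∀ u ∈ Set.Icc a (a + δ), ∀ v ∈ Set.Icc b (b + δ),
      |D 0 0 u v - q u v| ≤ absEnergy 2 a b δ D := by
  have habs : ∀ {k l}, k + l ≤ 2 → Continuous (Function.uncurry fun u v => |D k l u v|) :=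
    fun h => (hD.continuous h).abs
  obtain ⟨v₀, hv₀, hmean₂₀⟩ := exists_mul_eq_integral
    (continuous_integral_right (continuous_uncurry_swap (habs (k := 2) (l := 0) le_rfl))
      a (a + δ)) (lt_add_of_pos_right b hδ)
  obtain ⟨u₀, hu₀, hmean₀₂⟩ := exists_mul_eq_integral
    (continuous_integral_right (habs (k := 0) (l := 2) le_rfl) b (b + δ))
    (lt_add_of_pos_right a hδ)
  rw [← squareIntegral_swap (habs (k := 2) (l := 0) le_rfl)] at hmean₂₀
  have hmem : (fun u v => (D 0 0 u₀ v₀ - D 1 0 u₀ v₀ * u₀ - D 0 1 u₀ v₀ * v₀) +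
      D 1 0 u₀ v₀ * (u ^ 1 * v ^ 0) + D 0 1 u₀ v₀ * (u ^ 0 * v ^ 1)) ∈ tensorPoly 2 :=
    Submodule.add_mem _ (Submodule.add_mem _ (const_mem_tensorPoly two_pos _)
      (const_mul_monomial_mem_tensorPoly _ one_lt_two two_pos))
      (const_mul_monomial_mem_tensorPoly _ two_pos one_lt_two)
  refine ⟨_, hmem, fun u hu v hv => ?_⟩
  have hleft := abs_sub_sub_deriv_mul_le (fun s => hD.hasDerivAt_left (k := 0) (l := 0)
    (by omega) s v₀) (fun s => hD.hasDerivAt_left (by omega) s v₀)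
    (hD.continuous_left le_rfl v₀) hu hu₀
  have hright := abs_sub_sub_deriv_mul_le (hD.hasDerivAt_right (k := 0) (l := 0) (by omega) u₀)
    (hD.hasDerivAt_right (by omega) u₀) (hD.continuous_right le_rfl u₀) hv hv₀
  have hmixed := abs_mixedDifference_le hD hδ.le hu hu₀ hv hv₀
  rw [add_sub_cancel_left] at hmean₂₀ hmean₀₂ hleft hright
  simp only [zero_add, one_add_one_eq_two] at hleft hright
  rw [hmean₂₀] at hleft
  rw [hmean₀₂] at hright
  calc _ = |(D 0 0 u v₀ - D 0 0 u₀ v₀ - D 1 0 u₀ v₀ * (u - u₀)) +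
        ((D 0 0 u v - D 0 0 u₀ v) - (D 0 0 u v₀ - D 0 0 u₀ v₀)) +
        (D 0 0 u₀ v - D 0 0 u₀ v₀ - D 0 1 u₀ v₀ * (v - v₀))| := by congr 1; ring
    _ ≤ _ := abs_add_three _ _ _
    _ ≤ _ := add_le_add (add_le_add hleft hmixed) hright
    _ = absEnergy 2 a b δ D := by
        simp only [absEnergy, Finset.Nat.sum_antidiagonal_succ, Finset.Nat.antidiagonal_zero,
          Finset.sum_singleton, squareIntegral]
        ring

theorem exists_tensorPoly_approx_of_shifts (hD : IsMixedDerivFamily (m + 1) D) (hδ : 0 ≤ δ)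
    {B : ℝ}
    (hleft : ∃ q ∈ tensorPoly m, ∀ u ∈ Set.Icc a (a + δ), ∀ v ∈ Set.Icc b (b + δ),
      |D 1 0 u v - q u v| ≤ B)
    (hright : ∃ q ∈ tensorPoly m, ∀ u ∈ Set.Icc a (a + δ), ∀ v ∈ Set.Icc b (b + δ),
      |D 0 1 u v - q u v| ≤ B) :
    ∃ q ∈ tensorPoly (m + 1), ∀ u ∈ Set.Icc a (a + δ), ∀ v ∈ Set.Icc b (b + δ),
      |D 0 0 u v - q u v| ≤ 2 * δ * B := by
  obtain ⟨q₁, hq₁, hle₁⟩ := hleft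
  obtain ⟨q₂, hq₂, hle₂⟩ := hright
  refine ⟨_, Submodule.add_mem _ (Submodule.add_mem _
    (const_mem_tensorPoly m.succ_pos (D 0 0 a b))
    (integral_left_mem_tensorPoly a b hq₁)) (integral_right_mem_tensorPoly b hq₂),
    fun u hu v hv => ?_⟩
  have h₁ := abs_sub_sub_integral_le
    (fun s => hD.hasDerivAt_left (k := 0) (l := 0) (by omega) s b)
    (hD.continuous_left (by omega) b)
    ((continuous_uncurry_of_mem_tensorPoly hq₁).uncurry_right b)
    (fun s hs => hle₁ s hs b (by simpa using hδ)) hu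
  have h₂ := abs_sub_sub_integral_le (hD.hasDerivAt_right (k := 0) (l := 0) (by omega) u)
    (hD.continuous_right (by omega) u)
    ((continuous_uncurry_of_mem_tensorPoly hq₂).uncurry_left u)
    (fun t ht => hle₂ u hu t ht) hv
  calc _ = |(D 0 0 u b - D 0 0 a b - ∫ s in a..u, q₁ s b) +
        (D 0 0 u v - D 0 0 u b - ∫ t in b..v, q₂ u t)| := by
        simp only [Pi.add_apply]
        congr 1
        ring
    _ ≤ _ := abs_add_le _ _
    _ ≤ _ := add_le_add h₁ h₂
    _ = 2 * δ * B := by ring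

theorem exists_tensorPoly_approx (hm : 2 ≤ m) (hD : IsMixedDerivFamily m D) (hδ : 0 < δ) :
    ∃ q ∈ tensorPoly m, ∀ u ∈ Set.Icc a (a + δ), ∀ v ∈ Set.Icc b (b + δ),
      |D 0 0 u v - q u v| ≤ (2 * δ) ^ (m - 2) * absEnergy m a b δ D := by
  induction m, hm using Nat.le_induction generalizing D with
  | base => simpa using exists_tensorPoly_two_approx hD hδ
  | succ m hm ih =>
    have hpow : m + 1 - 2 = m - 2 + 1 := by omega
    have hscale : 0 ≤ (2 * δ) ^ (m - 2) := by positivity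
    rw [hpow, pow_succ', mul_assoc]
    refine exists_tensorPoly_approx_of_shifts hD hδ.le ?_ ?_
    · obtain ⟨q, hq, hle⟩ := ih hD.shift_left
      exact ⟨q, hq, fun u hu v hv => (hle u hu v hv).trans
        (mul_le_mul_of_nonneg_left (absEnergy_shift_left_le hδ.le) hscale)⟩
    · obtain ⟨q, hq, hle⟩ := ih hD.shift_right
      exact ⟨q, hq, fun u hu v hv => (hle u hu v hv).trans
        (mul_le_mul_of_nonneg_left (absEnergy_shift_right_le hδ.le) hscale)⟩

/-- The constant in the bound of the squared local approximation error by the energy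
(`exists_tensorPoly_sq_approx`): `m - 2` integrations contribute `2` each to the error, and
Cauchy–Schwarz over the `m + 1` derivatives of order `m` the factor `m + 1`. -/
def localApproxConst (m : ℕ) : ℝ :=
  4 ^ (m - 2) * (m + 1)

theorem one_le_localApproxConst (m : ℕ) : 1 ≤ localApproxConst m :=
  one_le_mul_of_one_le_of_one_le (one_le_pow₀ (by norm_num)) (by simp)

theorem localApproxConst_pos (m : ℕ) : 0 < localApproxConst m :=
  one_pos.trans_le (one_le_localApproxConst m)

theorem exists_tensorPoly_sq_approx (hm : 2 ≤ m) (hD : IsMixedDerivFamily m D) (hδ : 0 < δ) :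
    ∃ q ∈ tensorPoly m, ∀ u ∈ Set.Icc a (a + δ), ∀ v ∈ Set.Icc b (b + δ),
      (D 0 0 u v - q u v) ^ 2 ≤
        localApproxConst m * δ ^ (2 * (m - 1)) * energy m a b δ D := by
  obtain ⟨q, hq, hle⟩ := exists_tensorPoly_approx hm hD hδ (a := a) (b := b)
  refine ⟨q, hq, fun u hu v hv => ?_⟩
  obtain ⟨k, rfl⟩ := Nat.exists_eq_add_of_le' hm
  calc (D 0 0 u v - q u v) ^ 2
      ≤ ((2 * δ) ^ k * absEnergy (k + 2) a b δ D) ^ 2 :=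
        sq_le_sq' (abs_le.1 (hle u hu v hv)).1 (abs_le.1 (hle u hu v hv)).2
    _ = (2 * δ) ^ (2 * k) * absEnergy (k + 2) a b δ D ^ 2 := by ring
    _ ≤ (2 * δ) ^ (2 * k) * (((k + 2 : ℕ) + 1) * δ ^ 2 * energy (k + 2) a b δ D) :=
        mul_le_mul_of_nonneg_left (sq_absEnergy_le hD hδ.le) (by positivity)
    _ = _ := by
        rw [localApproxConst, show (4 : ℝ) = 2 ^ 2 by norm_num, ← pow_mul, mul_pow,
          Nat.add_sub_cancel, show 2 * (k + 2 - 1) = 2 * k + 2 by omega]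
        ring

end LocalApproximation

theorem finrank_finset_sup_le_sum {κ E : Type*} [AddCommGroup E] [Module ℝ E]
    [FiniteDimensional ℝ E] (s : Finset κ) (V : κ → Submodule ℝ E) :
    Module.finrank ℝ (s.sup V : Submodule ℝ E) ≤ ∑ i ∈ s, Module.finrank ℝ (V i) := by
  classical
  induction s using Finset.induction with
  | empty => simp
  | insert i s hi ih =>
    rw [Finset.sup_insert, Finset.sum_insert hi]
    exact (Submodule.finrank_add_le_finrank_add_finrank _ _).trans (Nat.add_le_add_left ih _)

section ApproximationOnPoints

variable {ι : Type*} {m : ℕ} {y z : ι → ℝ} {S : Finset ι} {a b δ κ ε N : ℝ}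

/-- All points `(y i, z i)` with `i ∈ S` lie in the square `[a, a + δ] × [b, b + δ]`. -/
def InSquare (y z : ι → ℝ) (S : Finset ι) (a b δ : ℝ) : Prop :=
  ∀ i ∈ S, y i ∈ Set.Icc a (a + δ) ∧ z i ∈ Set.Icc b (b + δ)

/-- Some subspace of dimension at most `N` approximates, at the points `(y i, z i)` with `i ∈ S`,
every mixed derivative family of order `m` with squared `ℓ²` error at most `κ` times its energy on
the square `[a, a + δ] × [b, b + δ]`. The approximants vanish off `S`, so that approximations on
disjoint sets of points can be added. -/
def ApproximableOn (m : ℕ) (y z : ι → ℝ) (κ : ℝ) (S : Finset ι) (a b δ N : ℝ) : Prop :=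
  ∃ V : Submodule ℝ (ι → ℝ), (Module.finrank ℝ V : ℝ) ≤ N ∧ ∀ D, IsMixedDerivFamily m D →
    ∃ v ∈ V, (∀ i ∉ S, v i = 0) ∧
      ∑ i ∈ S, (D 0 0 (y i) (z i) - v i) ^ 2 ≤ κ * energy m a b δ D

theorem ApproximableOn.mono (h : ApproximableOn m y z κ S a b δ N) {N' : ℝ} (hN : N ≤ N') :
    ApproximableOn m y z κ S a b δ N' :=
  let ⟨V, hV, happrox⟩ := h
  ⟨V, hV.trans hN, happrox⟩

theorem InSquare.exists_quadrant (hS : InSquare y z S a b δ) :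
    ∃ quad : ι → Fin 2 × Fin 2, ∀ q, InSquare y z {i ∈ S | quad i = q}
      (a + q.1 * (δ / 2)) (b + q.2 * (δ / 2)) (δ / 2) := by
  have hquad : ∀ i, ∃ q : Fin 2 × Fin 2, i ∈ S →
      y i ∈ Set.Icc (a + q.1 * (δ / 2)) (a + q.1 * (δ / 2) + δ / 2) ∧
      z i ∈ Set.Icc (b + q.2 * (δ / 2)) (b + q.2 * (δ / 2) + δ / 2) := by
    intro i
    by_cases hi : i ∈ S
    · obtain ⟨j, hj⟩ := exists_mem_half (hS i hi).1
      obtain ⟨k, hk⟩ := exists_mem_half (hS i hi).2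
      exact ⟨(j, k), fun _ => ⟨hj, hk⟩⟩
    · exact ⟨0, fun h => absurd h hi⟩
  choose quad hquad using hquad
  refine ⟨quad, fun q i hi => ?_⟩
  obtain ⟨hiS, rfl⟩ := Finset.mem_filter.1 hi
  exact hquad i hiS

theorem sum_sq_sub_sum_eq_sum_fiberwise {κ : Type*} [Fintype κ] [DecidableEq κ] (c : ι → κ)
    (f : ι → ℝ) (v : κ → ι → ℝ) (hv : ∀ q, ∀ i ∉ ({i ∈ S | c i = q} : Finset ι), v q i = 0) :
    ∑ i ∈ S, (f i - (∑ q, v q) i) ^ 2 =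
      ∑ q, ∑ i ∈ S with c i = q, (f i - v q i) ^ 2 := by
  rw [← Finset.sum_fiberwise S c]
  refine Finset.sum_congr rfl fun q _ => Finset.sum_congr rfl fun i hi => ?_
  obtain ⟨-, rfl⟩ := Finset.mem_filter.1 hi
  rw [Finset.sum_apply, Finset.sum_eq_single (c i) (fun q _ hq => hv q i ?_) (by simp)]
  simp [hq.symm]

theorem ApproximableOn.of_quadrants [Finite ι] (hS : InSquare y z S a b δ) {α β : ℝ}
    (h : ∀ (a' b' : ℝ) (S' : Finset ι), S' ⊆ S → InSquare y z S' a' b' (δ / 2) →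
      ApproximableOn m y z κ S' a' b' (δ / 2) (α + β * S'.card)) :
    ApproximableOn m y z κ S a b δ (4 * α + β * S.card) := by
  obtain ⟨quad, hquad⟩ := hS.exists_quadrant
  choose V hV happrox using fun q => h _ _ _ (Finset.filter_subset _ _) (hquad q)
  refine ⟨Finset.univ.sup V, ?_, fun D hD => ?_⟩
  · calc (Module.finrank ℝ (Finset.univ.sup V : Submodule ℝ (ι → ℝ)) : ℝ)
        ≤ ∑ q, (Module.finrank ℝ (V q) : ℝ) := mod_cast finrank_finset_sup_le_sum _ V
      _ ≤ ∑ q, (α + β * (({i ∈ S | quad i = q} : Finset ι).card : ℝ)) :=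
        Finset.sum_le_sum fun q _ => hV q
      _ = 4 * α + β * S.card := by
        rw [Finset.sum_add_distrib, ← Finset.mul_sum,
          Finset.card_eq_sum_card_fiberwise (f := quad) (t := Finset.univ) (by simp [Set.MapsTo])]
        simp
  · choose v hv hoff herr using fun q => happrox q D hD
    refine ⟨∑ q, v q, sum_mem fun q _ => ?_, fun i hi => ?_, ?_⟩
    · exact Finset.le_sup (f := V) (Finset.mem_univ q) (hv q)
    · rw [Finset.sum_apply]
      exact Finset.sum_eq_zero fun q _ => hoff q i (by simp [hi])
    · rw [sum_sq_sub_sum_eq_sum_fiberwise quad _ v hoff, energy_eq_sum_quadrants hD,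
        Finset.mul_sum]
      exact Finset.sum_le_sum fun q _ => herr q

theorem ApproximableOn.of_card_mul_le (hm : 2 ≤ m) (hδ : 0 < δ) (hS : InSquare y z S a b δ)
    (hε : S.card * δ ^ (2 * (m - 1)) ≤ ε) :
    ApproximableOn m y z (localApproxConst m * ε) S a b δ (m ^ 2) := by
  classical
  let evalOn : (ℝ → ℝ → ℝ) →ₗ[ℝ] ι → ℝ := LinearMap.pi fun i =>
    if i ∈ S then LinearMap.proj (R := ℝ) (φ := fun _ => ℝ) (z i) ∘ₗ LinearMap.proj (y i) else 0
  have hevalOn : ∀ q, ∀ i ∈ S, evalOn q i = q (y i) (z i) := fun q i hi => by simp [evalOn, hi]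
  refine ⟨(tensorPoly m).map evalOn, ?_, fun D hD => ?_⟩
  · exact_mod_cast (Submodule.finrank_map_le evalOn _).trans (finrank_tensorPoly_le m)
  obtain ⟨q, hq, hle⟩ := exists_tensorPoly_sq_approx hm hD hδ (a := a) (b := b)
  refine ⟨evalOn q, Submodule.mem_map_of_mem hq, fun i hi => by simp [evalOn, hi], ?_⟩
  calc ∑ i ∈ S, (D 0 0 (y i) (z i) - evalOn q i) ^ 2
      ≤ S.card • (localApproxConst m * δ ^ (2 * (m - 1)) * energy m a b δ D) :=
        Finset.sum_le_card_nsmul _ _ _ fun i hi => by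
          rw [hevalOn q i hi]
          exact hle _ (hS i hi).1 _ (hS i hi).2
    _ = localApproxConst m * (S.card * δ ^ (2 * (m - 1))) * energy m a b δ D := by
        rw [nsmul_eq_mul]
        ring
    _ ≤ localApproxConst m * ε * energy m a b δ D :=
        mul_le_mul_of_nonneg_right (mul_le_mul_of_nonneg_left hε (localApproxConst_pos m).le)
          (energy_nonneg hδ.le)

theorem half_pow_two_mul (δ : ℝ) (k : ℕ) : (δ / 2) ^ (2 * k) = δ ^ (2 * k) / 4 ^ k := by
  rw [div_pow, pow_mul 2]
  norm_num

/-- A square is subdivided only while `S.card * δ ^ (2 * (m - 1)) > ε`; subdividing divides the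
total of this weight by `4 ^ (m - 1) ≥ 4`, which pays for the three additional squares. -/
theorem ApproximableOn.of_quadrants_of_lt [Finite ι] (hm : 2 ≤ m) (hε : 0 < ε)
    (hS : InSquare y z S a b δ) (hsplit : ε < S.card * δ ^ (2 * (m - 1)))
    (h : ∀ (a' b' : ℝ) (S' : Finset ι), S' ⊆ S → InSquare y z S' a' b' (δ / 2) →
      ApproximableOn m y z κ S' a' b' (δ / 2)
        (m ^ 2 * (1 + 4 * (S'.card * (δ / 2) ^ (2 * (m - 1)) / ε)))) :
    ApproximableOn m y z κ S a b δ (m ^ 2 * (1 + 4 * (S.card * δ ^ (2 * (m - 1)) / ε))) := by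
  have hfour : (4 : ℝ) ≤ 4 ^ (m - 1) := le_self_pow₀ (by norm_num) (by omega)
  have hweight : 1 < S.card * δ ^ (2 * (m - 1)) / ε := by rwa [lt_div_iff₀ hε, one_mul]
  refine (of_quadrants hS (α := m ^ 2)
    (β := m ^ 2 * (4 * (δ ^ (2 * (m - 1)) / 4 ^ (m - 1) / ε))) fun a' b' S' hsub hS' =>
      (h a' b' S' hsub hS').mono (le_of_eq ?_)).mono ?_
  · rw [half_pow_two_mul]
    ring
  · calc 4 * (m : ℝ) ^ 2 + m ^ 2 * (4 * (δ ^ (2 * (m - 1)) / 4 ^ (m - 1) / ε)) * S.card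
        = m ^ 2 * (4 + 4 * (S.card * δ ^ (2 * (m - 1)) / ε) / 4 ^ (m - 1)) := by ring
      _ ≤ m ^ 2 * (1 + 4 * (S.card * δ ^ (2 * (m - 1)) / ε)) := by
        refine mul_le_mul_of_nonneg_left ?_ (by positivity)
        generalize S.card * δ ^ (2 * (m - 1)) / ε = w at hweight
        have hdiv : 4 * w / 4 ^ (m - 1) ≤ w := by
          rw [div_le_iff₀ (by positivity)]
          nlinarith
        linarith

theorem ApproximableOn.of_pos [Finite ι] (hm : 2 ≤ m) (hε : 0 < ε) (hδ : 0 < δ)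
    (hS : InSquare y z S a b δ) :
    ApproximableOn m y z (localApproxConst m * ε) S a b δ
      (m ^ 2 * (1 + 4 * (S.card * δ ^ (2 * (m - 1)) / ε))) := by
  obtain ⟨t, ht⟩ := pow_unbounded_of_one_lt (S.card * δ ^ (2 * (m - 1)) / ε)
    (by norm_num : (1 : ℝ) < 4)
  rw [div_lt_iff₀' hε] at ht
  replace ht := ht.le
  induction t generalizing S a b δ with
  | zero =>
    exact (of_card_mul_le hm hδ hS (by simpa using ht)).mono
      (le_mul_of_one_le_right (by positivity) (le_add_of_nonneg_right (by positivity)))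
  | succ t ih =>
    rcases le_or_gt (S.card * δ ^ (2 * (m - 1))) ε with hleaf | hsplit
    · exact (of_card_mul_le hm hδ hS hleaf).mono
        (le_mul_of_one_le_right (by positivity) (le_add_of_nonneg_right (by positivity)))
    refine of_quadrants_of_lt hm hε hS hsplit fun a' b' S' hsub hS' => ih (by positivity) hS' ?_
    calc (S'.card : ℝ) * (δ / 2) ^ (2 * (m - 1))
        ≤ S.card * δ ^ (2 * (m - 1)) / 4 ^ (m - 1) := by
          rw [half_pow_two_mul, mul_div_assoc]
          exact mul_le_mul_of_nonneg_right (mod_cast Finset.card_le_card hsub) (by positivity)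
      _ ≤ ε * 4 ^ (t + 1) / 4 := by
          have hfour : (4 : ℝ) ≤ 4 ^ (m - 1) := le_self_pow₀ (by norm_num) (by omega)
          gcongr
      _ = ε * 4 ^ t := by ring

theorem ApproximableOn.of_grid [Finite ι] (hm : 2 ≤ m) (hε : 0 < ε) (L : ℕ) (hδ : 0 < δ)
    (hS : InSquare y z S a b δ) :
    ApproximableOn m y z (localApproxConst m * ε) S a b δ
      (m ^ 2 * (4 ^ L + 4 * (S.card * (δ ^ (2 * (m - 1)) / 4 ^ (L * (m - 1))) / ε))) := by
  induction L generalizing S a b δ with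
  | zero => simpa using of_pos hm hε hδ hS
  | succ L ih =>
    have hpow : (4 : ℝ) ^ ((L + 1) * (m - 1)) = 4 ^ (m - 1) * 4 ^ (L * (m - 1)) := by ring
    refine (of_quadrants hS (α := m ^ 2 * 4 ^ L)
      (β := m ^ 2 * (4 * (δ ^ (2 * (m - 1)) / 4 ^ ((L + 1) * (m - 1)) / ε)))
      fun a' b' S' _ hS' => (ih (by positivity) hS').mono (le_of_eq ?_)).mono (le_of_eq ?_)
    · rw [half_pow_two_mul, hpow, ← div_div]
      ring
    · ring

theorem approximableOn_unitSquare [Fintype ι] [Nonempty ι] (hm : 2 ≤ m)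
    (hy : ∀ i, y i ∈ Set.Icc (0 : ℝ) 1) (hz : ∀ i, z i ∈ Set.Icc (0 : ℝ) 1) (L : ℕ) :
    ApproximableOn m y z (localApproxConst m * (Fintype.card ι / 4 ^ (L * m))) Finset.univ 0 0 1
      (5 * m ^ 2 * 4 ^ L) := by
  have hcard : (0 : ℝ) < Fintype.card ι := mod_cast Fintype.card_pos
  refine (ApproximableOn.of_grid hm (div_pos hcard (by positivity)) L one_pos
    fun i _ => by simpa using ⟨hy i, hz i⟩).mono (le_of_eq ?_)
  obtain ⟨k, rfl⟩ := Nat.exists_eq_add_of_le' hm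
  have hpow : (4 : ℝ) ^ (L * (k + 2)) = 4 ^ (L * (k + 2 - 1)) * 4 ^ L := by
    rw [← pow_add, show k + 2 - 1 = k + 1 by omega]
    ring
  rw [hpow, Finset.card_univ]
  field_simp
  ring

end ApproximationOnPoints

section DirectionalDerivatives

variable {E G : Type*} [NormedAddCommGroup E] [NormedSpace ℝ E] [NormedAddCommGroup G]
  [NormedSpace ℝ G] {F : E → G}

/-- The derivative of `F` in the direction `w`, as an operator on functions which can be
iterated. -/
def dirDeriv (w : E) (F : E → G) : E → G :=
  fun x => fderiv ℝ F x w

theorem contDiff_dirDeriv {n k : WithTop ℕ∞} (hF : ContDiff ℝ n F) (h : k + 1 ≤ n) (w : E) :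
    ContDiff ℝ k (dirDeriv w F) :=
  (hF.fderiv_right h).clm_apply contDiff_const

theorem contDiff_iterate_dirDeriv {n k : WithTop ℕ∞} {a : ℕ} (hF : ContDiff ℝ n F)
    (h : k + a ≤ n) (w : E) : ContDiff ℝ k ((dirDeriv w)^[a] F) := by
  induction a generalizing k with
  | zero => exact hF.of_le (by simpa using h)
  | succ a ih =>
    rw [Function.iterate_succ_apply']
    exact contDiff_dirDeriv (ih (by rwa [add_assoc, add_comm 1, ← Nat.cast_add_one])) le_rfl w

theorem dirDeriv_comm (hF : ContDiff ℝ 2 F) (w w' : E) :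
    dirDeriv w (dirDeriv w' F) = dirDeriv w' (dirDeriv w F) := by
  have hdiff : Differentiable ℝ (fderiv ℝ F) :=
    (hF.fderiv_right (m := 1) (by norm_num)).differentiable one_ne_zero
  have hsecond : ∀ v v' x, dirDeriv v (dirDeriv v' F) x = fderiv ℝ (fderiv ℝ F) x v v' := by
    intro v v' x
    change fderiv ℝ (fun y => fderiv ℝ F y v') x v = _
    rw [fderiv_clm_apply (hdiff x) (differentiableAt_const v')]
    simp
  ext x
  rw [hsecond, hsecond]
  exact (hF.contDiffAt.isSymmSndFDerivAt (by simp)).eq w w'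

theorem dirDeriv_iterate_comm {a : ℕ} (hF : ContDiff ℝ (a + 1 : ℕ) F) (w w' : E) :
    dirDeriv w ((dirDeriv w')^[a] F) = (dirDeriv w')^[a] (dirDeriv w F) := by
  induction a generalizing F with
  | zero => rfl
  | succ a ih =>
    rw [Function.iterate_succ_apply, Function.iterate_succ_apply,
      ih (contDiff_dirDeriv hF (by norm_cast) w'),
      dirDeriv_comm (hF.of_le (by norm_cast; omega))]

theorem hasDerivAt_comp_dirDeriv {γ : ℝ → E} {w : E} {t : ℝ} (hγ : HasDerivAt γ w t)
    (hF : Differentiable ℝ F) : HasDerivAt (fun s => F (γ s)) (dirDeriv w F (γ t)) t :=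
  (hF (γ t)).hasFDerivAt.comp_hasDerivAt t hγ

theorem iteratedDeriv_comp_eq_iterate_dirDeriv {γ : ℝ → E} {w : E}
    (hγ : ∀ t, HasDerivAt γ w t) {a : ℕ} (hF : ContDiff ℝ a F) :
    iteratedDeriv a (fun t => F (γ t)) = fun t => (dirDeriv w)^[a] F (γ t) := by
  induction a generalizing F with
  | zero => simp
  | succ a ih =>
    have hderiv : deriv (fun t => F (γ t)) = fun t => dirDeriv w F (γ t) := funext fun t =>
      (hasDerivAt_comp_dirDeriv (hγ t) (hF.differentiable (by simp))).deriv
    rw [iteratedDeriv_succ', hderiv, ih (contDiff_dirDeriv hF (by norm_cast) w),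
      Function.iterate_succ]
    rfl

end DirectionalDerivatives

section MixedPartials

variable {m : ℕ} {g : ℝ → ℝ → ℝ}

/-- The mixed partial derivatives of `g` as iterated directional derivatives. For smooth `g` they
agree with `pd` (`pd_eq_mixedDeriv`), but their regularity is easier to track. -/
def mixedDeriv (g : ℝ → ℝ → ℝ) (k l : ℕ) (u v : ℝ) : ℝ :=
  (dirDeriv (1, 0))^[k] ((dirDeriv (0, 1))^[l] (Function.uncurry g)) (u, v)

theorem pd_eq_mixedDeriv {k l : ℕ} (hg : ContDiff ℝ (k + l : ℕ) (Function.uncurry g)) :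
    pd k l g = mixedDeriv g k l := by
  ext u v
  have hright : ∀ t, iteratedDeriv l (g t) v = (dirDeriv (0, 1))^[l] (Function.uncurry g) (t, v) :=
    fun t => congrFun (iteratedDeriv_comp_eq_iterate_dirDeriv (F := Function.uncurry g)
      (fun s => (hasDerivAt_const s t).prodMk (hasDerivAt_id s)) (hg.of_le (by norm_cast; omega))) v
  simp only [pd, hright]
  exact congrFun (iteratedDeriv_comp_eq_iterate_dirDeriv
    (fun s => (hasDerivAt_id s).prodMk (hasDerivAt_const s v))
    (contDiff_iterate_dirDeriv hg (by norm_cast) _)) u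

theorem contDiff_uncurry_mixedDeriv (hg : ContDiff ℝ m (Function.uncurry g)) {j k l : ℕ}
    (h : j + k + l ≤ m) : ContDiff ℝ j (Function.uncurry (mixedDeriv g k l)) :=
  contDiff_iterate_dirDeriv
    (contDiff_iterate_dirDeriv hg (k := (j + k : ℕ)) (by norm_cast) (0, 1)) (by norm_cast) (1, 0)

theorem isMixedDerivFamily_mixedDeriv (hg : ContDiff ℝ m (Function.uncurry g)) :
    IsMixedDerivFamily m (mixedDeriv g) where
  continuous h := (contDiff_uncurry_mixedDeriv hg (j := 0) (by omega)).continuous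
  hasDerivAt_left {k l} h u v := by
    have hdiff := (contDiff_uncurry_mixedDeriv hg (j := 1) (k := k) (l := l)
      (by omega)).differentiable (by simp)
    simp only [mixedDeriv, Function.iterate_succ_apply']
    exact hasDerivAt_comp_dirDeriv ((hasDerivAt_id u).prodMk (hasDerivAt_const u v)) hdiff
  hasDerivAt_right {k l} h u v := by
    have hdiff := (contDiff_uncurry_mixedDeriv hg (j := 1) (k := k) (l := l)
      (by omega)).differentiable (by simp)
    have hright : ContDiff ℝ (k + 1 : ℕ) ((dirDeriv (0, 1))^[l] (Function.uncurry g)) :=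
      contDiff_iterate_dirDeriv hg (by norm_cast; omega) _
    simp only [mixedDeriv, Function.iterate_succ_apply' _ l]
    rw [← dirDeriv_iterate_comm hright]
    exact hasDerivAt_comp_dirDeriv ((hasDerivAt_const v u).prodMk (hasDerivAt_id v)) hdiff

theorem omega2M_eq_energy (hg : ContDiff ℝ m (Function.uncurry g)) :
    Omega2M m g = energy m 0 0 1 (mixedDeriv g) := by
  have hfam := isMixedDerivFamily_mixedDeriv hg
  rw [Omega2M, energy, Finset.Nat.sum_antidiagonal_eq_sum_range_succ_mk]
  refine Finset.sum_congr rfl fun k hk => ?_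
  have hkm : k + (m - k) = m := Nat.add_sub_cancel' (Finset.mem_range_succ_iff.1 hk)
  have hcont : Continuous (Function.uncurry fun u v => mixedDeriv g k (m - k) u v ^ 2) :=
    (hfam.continuous hkm.le).pow 2
  rw [pd_eq_mixedDeriv (by rwa [hkm]), setIntegral_unitSquare_eq hcont]

theorem omega2M_left {h : ℝ → ℝ} (hh : ContDiff ℝ m h) :
    Omega2M m (fun u _ => h u) = Omega1M m h := by
  have hmixed : ∀ k < m, pd k (m - k) (fun u _ => h u) = 0 := by
    intro k hk
    ext u v
    simp [pd, iteratedDeriv_const, Nat.sub_ne_zero_of_lt hk]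
  have hcont : Continuous (Function.uncurry fun u _ : ℝ => iteratedDeriv m h u ^ 2) :=
    ((hh.continuous_iteratedDeriv m le_rfl).comp continuous_fst).pow 2
  rw [Omega2M, Finset.sum_range_succ, Finset.sum_eq_zero fun k hk => by
    simp [hmixed k (Finset.mem_range.1 hk)]]
  simp only [pd, Nat.sub_self, iteratedDeriv_zero, zero_add]
  rw [setIntegral_unitSquare_eq hcont]
  simp [squareIntegral, Omega1M]

end MixedPartials

section EmpiricalNorm

variable {m n : ℕ}

/-- Evaluation vectors as points of a Euclidean space, scaled so that the Euclidean norm is the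
empirical norm. -/
def empiricalEquiv (hn : n ≠ 0) : (Fin n → ℝ) ≃ₗ[ℝ] EuclideanSpace ℝ (Fin n) :=
  (WithLp.linearEquiv 2 ℝ (Fin n → ℝ)).symm ≪≫ₗ
    LinearEquiv.smulOfNeZero ℝ _ (√n)⁻¹ (by positivity)

theorem norm_empiricalEquiv (hn : n ≠ 0) (v : Fin n → ℝ) : ‖empiricalEquiv hn v‖ = normN v := by
  have hexpand : empiricalEquiv hn v = (√n)⁻¹ • WithLp.toLp 2 v := rfl
  rw [hexpand, norm_smul, EuclideanSpace.norm_eq, normN, normSqN, Real.sqrt_mul (by positivity)]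
  simp [abs_of_nonneg (Real.sqrt_nonneg _)]

theorem exists_submodule_approx_bivariate (hm : 2 ≤ m) (hn : n ≠ 0) {y z : Fin n → ℝ}
    (hy : ∀ i, y i ∈ Set.Icc (0 : ℝ) 1) (hz : ∀ i, z i ∈ Set.Icc (0 : ℝ) 1) (L : ℕ) :
    ∃ V : Submodule ℝ (Fin n → ℝ), Module.finrank ℝ V ≤ 5 * m ^ 2 * 4 ^ L ∧
      ∀ g : ℝ → ℝ → ℝ, ContDiff ℝ m (Function.uncurry g) → ∃ v ∈ V,
        normN (fun i => g (y i) (z i) - v i) ≤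
          √(localApproxConst m) / 2 ^ (L * m) * √(Omega2M m g) := by
  have : NeZero n := ⟨hn⟩
  obtain ⟨V, hV, happrox⟩ := approximableOn_unitSquare hm hy hz L
  refine ⟨V, mod_cast hV, fun g hg => ?_⟩
  obtain ⟨v, hv, -, herr⟩ := happrox _ (isMixedDerivFamily_mixedDeriv hg)
  refine ⟨v, hv, ?_⟩
  have hfour : (4 : ℝ) ^ (L * m) = (2 ^ (L * m)) ^ 2 := by
    rw [show (4 : ℝ) = 2 ^ 2 by norm_num, ← pow_mul, ← pow_mul, mul_comm]
  have hpow : (2 : ℝ) ^ (L * m) = √(4 ^ (L * m)) := by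
    rw [hfour, Real.sqrt_sq (by positivity)]
  have hconst := (localApproxConst_pos m).le
  rw [omega2M_eq_energy hg, hpow, ← Real.sqrt_div hconst, ← Real.sqrt_mul (by positivity)]
  refine Real.sqrt_le_sqrt ?_
  calc 1 / (n : ℝ) * ∑ i, (g (y i) (z i) - v i) ^ 2
      ≤ 1 / n * (localApproxConst m * (Fintype.card (Fin n) / 4 ^ (L * m)) *
          energy m 0 0 1 (mixedDeriv g)) :=
        mul_le_mul_of_nonneg_left herr (by positivity)
    _ = _ := by
        rw [Fintype.card_fin]
        field_simp

end EmpiricalNorm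

section AdditiveClass

variable {m n p : ℕ}

theorem normN_sum_le (hn : n ≠ 0) {ι : Type*} (s : Finset ι) (f : ι → Fin n → ℝ) :
    normN (∑ q ∈ s, f q) ≤ ∑ q ∈ s, normN (f q) := by
  simp only [← norm_empiricalEquiv hn, map_sum]
  exact norm_sum_le _ _

/-- The component of an additive representation attached to the index pair `q = (j, k)`, always
regarded as a bivariate function: for `j = k` it ignores its second argument. Pairs with `j > k`
are not in the index set and get the zero component. -/
def component (R : AddRepM p m) (q : Fin p × Fin p) : ℝ → ℝ → ℝ :=
  if q.1 = q.2 then fun u _ => R.main q.1 u else if q.1 < q.2 then R.inter q.1 q.2 else 0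

theorem contDiff_uncurry_component (R : AddRepM p m) (q : Fin p × Fin p) :
    ContDiff ℝ m (Function.uncurry (component R q)) := by
  unfold component
  split_ifs
  · exact (R.smooth_main q.1).comp contDiff_fst
  · exact R.smooth_inter q.1 q.2
  · exact contDiff_const

theorem SuppIn.component_eq_zero {R : AddRepM p m} {J : Finset (Fin p × Fin p)}
    (hR : SuppIn R J) {q : Fin p × Fin p} (hq : q ∉ J) : component R q = 0 := by
  obtain ⟨j, k⟩ := q
  unfold component
  split_ifs with hjk
  · obtain rfl : j = k := hjk
    have hmain : R.main j = 0 := by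
      contrapose! hq
      exact hR.1 j hq
    ext
    simp [hmain]
  · contrapose! hq
    exact (hR.2 j k hq).2
  · rfl

theorem sum_component_prod_univ {α : Type*} [AddCommMonoid α] (R : AddRepM p m)
    (φ : Fin p × Fin p → (ℝ → ℝ → ℝ) → α) (hφ : ∀ q, φ q 0 = 0) :
    ∑ q, φ q (component R q) = ∑ j, φ (j, j) (fun u _ => R.main j u) +
      ∑ j, ∑ k, if j < k then φ (j, k) (R.inter j k) else 0 := by
  rw [Fintype.sum_prod_type, ← Finset.sum_add_distrib]
  refine Finset.sum_congr rfl fun j _ => ?_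
  have hdiag : φ (j, j) (fun u _ => R.main j u) =
      ∑ k, if j = k then φ (j, j) (fun u _ => R.main j u) else 0 := by simp
  rw [hdiag, ← Finset.sum_add_distrib]
  refine Finset.sum_congr rfl fun k _ => ?_
  rcases lt_trichotomy j k with hjk | rfl | hjk
  · simp [component, hjk, hjk.ne]
  · simp [component]
  · simp [component, hjk.ne', hjk.not_gt, hφ]

theorem SuppIn.toFun_eq_sum_component {R : AddRepM p m} {J : Finset (Fin p × Fin p)}
    (hR : SuppIn R J) (x : Fin p → ℝ) :
    R.toFun x = ∑ q ∈ J, component R q (x q.1) (x q.2) := by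
  rw [Finset.sum_subset J.subset_univ fun q _ hq => by simp [hR.component_eq_zero hq],
    sum_component_prod_univ R (fun q g => g (x q.1) (x q.2)) fun _ => rfl]
  rfl

theorem sum_sqrt_omega2M_component_le (R : AddRepM p m) (J : Finset (Fin p × Fin p)) :
    ∑ q ∈ J, √(Omega2M m (component R q)) ≤ OmegaTildeGrM R := by
  have hzero : Omega2M m (0 : ℝ → ℝ → ℝ) = 0 :=
    (omega2M_left (h := fun _ => 0) contDiff_const).trans (by simp [Omega1M])
  calc ∑ q ∈ J, √(Omega2M m (component R q)) ≤ ∑ q, √(Omega2M m (component R q)) :=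
        Finset.sum_le_univ_sum_of_nonneg fun _ => Real.sqrt_nonneg _
    _ = OmegaTildeGrM R := by
        rw [sum_component_prod_univ R (fun _ g => √(Omega2M m g)) fun _ => by simp [hzero]]
        simp only [omega2M_left (R.smooth_main _), OmegaTildeGrM]

theorem omegaTildeGrM_nonneg (R : AddRepM p m) : 0 ≤ OmegaTildeGrM R := by
  simpa using sum_sqrt_omega2M_component_le R ∅

theorem exists_submodule_approx_evalVecM (hm : 2 ≤ m) (hn : n ≠ 0) {x : Fin n → Fin p → ℝ}
    (hx : ∀ i j, x i j ∈ Set.Icc (0 : ℝ) 1) (J : Finset (Fin p × Fin p)) (L : ℕ) :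
    ∃ V : Submodule ℝ (Fin n → ℝ), Module.finrank ℝ V ≤ J.card * (5 * m ^ 2) * 4 ^ L ∧
      ∀ R : AddRepM p m, SuppIn R J → ∃ v ∈ V,
        normN (evalVecM x R - v) ≤ √(localApproxConst m) / 2 ^ (L * m) * OmegaTildeGrM R := by
  choose V hV happrox using fun q : Fin p × Fin p =>
    exists_submodule_approx_bivariate hm hn (fun i => hx i q.1) (fun i => hx i q.2) L
  refine ⟨J.sup V, ?_, fun R hR => ?_⟩
  · calc Module.finrank ℝ (J.sup V : Submodule ℝ (Fin n → ℝ))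
        ≤ ∑ q ∈ J, Module.finrank ℝ (V q) := finrank_finset_sup_le_sum J V
      _ ≤ J.card • (5 * m ^ 2 * 4 ^ L) := Finset.sum_le_card_nsmul _ _ _ fun q _ => hV q
      _ = J.card * (5 * m ^ 2) * 4 ^ L := by rw [smul_eq_mul, mul_assoc J.card]
  · choose v hv herr using fun q => happrox q _ (contDiff_uncurry_component R q)
    refine ⟨∑ q ∈ J, v q, Submodule.sum_mem _ fun q hq => Finset.le_sup (f := V) hq (hv q), ?_⟩
    have hsplit : evalVecM x R - ∑ q ∈ J, v q =
        ∑ q ∈ J, fun i => component R q (x i q.1) (x i q.2) - v q i := by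
      ext i
      simp [evalVecM, hR.toFun_eq_sum_component]
    calc normN (evalVecM x R - ∑ q ∈ J, v q)
        ≤ ∑ q ∈ J, √(localApproxConst m) / 2 ^ (L * m) * √(Omega2M m (component R q)) := by
          rw [hsplit]
          exact (normN_sum_le hn _ _).trans (Finset.sum_le_sum fun q _ => herr q)
      _ ≤ √(localApproxConst m) / 2 ^ (L * m) * OmegaTildeGrM R := by
          rw [← Finset.mul_sum]
          gcongr
          exact sum_sqrt_omega2M_component_le R J

theorem exists_finset_normN_cover_log_card_le (hn : n ≠ 0) {H : Set (Fin n → ℝ)} {A : ℝ}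
    {d k N : ℕ} (hd : d ≠ 0) (hk : k ≠ 0) {V : ℕ → Submodule ℝ (Fin n → ℝ)}
    (hV : ∀ L, Module.finrank ℝ (V L) ≤ N * 2 ^ (d * L)) (hA : 1 ≤ A)
    (hH : ∀ h ∈ H, normN h ≤ 1)
    (happrox : ∀ L, ∀ h ∈ H, ∃ v ∈ V L, normN (h - v) ≤ A / 2 ^ (L * k)) {u : ℝ} (hu : 0 < u)
    (hu₁ : u ≤ 1) :
    ∃ T : Finset (Fin n → ℝ), (∀ h ∈ H, ∃ t ∈ T, normN (h - t) ≤ u) ∧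
      Real.log T.card ≤ 2 * (k + 3) * N * Real.log 5 * 2 ^ d * (2 * A) ^ ((d : ℝ) / k) *
        u ^ (-(d : ℝ) / k) := by
  set e := empiricalEquiv hn
  obtain ⟨T, hcover, hcard⟩ := exists_finset_cover_log_card_le (H := e '' H) hd hk
    (fun L => (V L).map (e : (Fin n → ℝ) →ₗ[ℝ] EuclideanSpace ℝ (Fin n)))
    (fun L => (Submodule.finrank_map_le _ _).trans (hV L)) hA
    (Set.forall_mem_image.2 fun h hh => (norm_empiricalEquiv hn h).trans_le (hH h hh))
    (fun L => Set.forall_mem_image.2 fun h hh => by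
      obtain ⟨v, hv, herr⟩ := happrox L h hh
      exact ⟨e v, Submodule.mem_map_of_mem hv,
        by rwa [← map_sub, norm_empiricalEquiv]⟩) hu hu₁
  refine ⟨T.map e.symm.toEquiv.toEmbedding, fun h hh => ?_, by rwa [Finset.card_map]⟩
  obtain ⟨t, ht, herr⟩ := hcover _ (Set.mem_image_of_mem e hh)
  refine ⟨e.symm t, Finset.mem_map_of_mem _ ht, ?_⟩
  rwa [← norm_empiricalEquiv hn, map_sub, LinearEquiv.apply_symm_apply]

/-- The entropy of the additive class is at most `entropyConst m` times the number of components
times `u ^ (-2 / m)`. -/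
def entropyConst (m : ℕ) : ℝ :=
  40 * (m + 3) * m ^ 2 * Real.log 5 * (2 * √(localApproxConst m)) ^ ((2 : ℝ) / m)

theorem entropyConst_pos (hm : m ≠ 0) : 0 < entropyConst m := by
  have := localApproxConst_pos m
  have := Real.log_pos (show (1 : ℝ) < 5 by norm_num)
  unfold entropyConst
  positivity

theorem exists_finset_evalVecM_cover_log_card_le (hm : 2 ≤ m) (hn : n ≠ 0)
    {x : Fin n → Fin p → ℝ} (hx : ∀ i j, x i j ∈ Set.Icc (0 : ℝ) 1)
    (J : Finset (Fin p × Fin p)) {u : ℝ} (hu : 0 < u) (hu₁ : u ≤ 1) :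
    ∃ T : Finset (Fin n → ℝ),
      (∀ R : AddRepM p m, SuppIn R J → normN (evalVecM x R) ≤ 1 → OmegaTildeGrM R ≤ 1 →
        ∃ t ∈ T, normN (evalVecM x R - t) ≤ u) ∧
      Real.log T.card ≤ entropyConst m * J.card * u ^ (-(2 : ℝ) / m) := by
  choose V hV happrox using exists_submodule_approx_evalVecM hm hn hx J
  obtain ⟨T, hcover, hcard⟩ := exists_finset_normN_cover_log_card_le hn two_ne_zero
    (show m ≠ 0 by omega) (V := V)
    (H := {h | ∃ R : AddRepM p m, SuppIn R J ∧ normN (evalVecM x R) ≤ 1 ∧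
      OmegaTildeGrM R ≤ 1 ∧ evalVecM x R = h})
    (fun L => by rw [pow_mul]; exact hV L)
    (Real.one_le_sqrt.2 (one_le_localApproxConst m))
    (by rintro _ ⟨R, -, hR, -, rfl⟩; exact hR)
    (by
      rintro L _ ⟨R, hJ, -, hR, rfl⟩
      obtain ⟨v, hv, herr⟩ := happrox L R hJ
      exact ⟨v, hv, herr.trans (mul_le_of_le_one_right (by positivity) hR)⟩) hu hu₁
  refine ⟨T, fun R hJ hR hΩ => hcover _ ⟨R, hJ, hR, hΩ, rfl⟩, hcard.trans_eq ?_⟩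
  unfold entropyConst
  push_cast
  ring

theorem rnM_pos (hn : n ≠ 0) : 0 < rnM m n :=
  Real.rpow_pos_of_pos (by positivity) _

theorem rnM_le_one (hn : 1 ≤ n) : rnM m n ≤ 1 :=
  Real.rpow_le_one_of_one_le_of_nonpos (mod_cast hn)
    (div_nonpos_of_nonpos_of_nonneg (by simp) (by positivity))

theorem normN_le_one_and_omegaTildeGrM_le_one {x : Fin n → Fin p → ℝ} {R : AddRepM p m}
    (hn : 1 ≤ n) (hR : normN (evalVecM x R) / rnM m n + OmegaTildeGrM R ≤ 1) :
    normN (evalVecM x R) ≤ 1 ∧ OmegaTildeGrM R ≤ 1 := by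
  have hr := rnM_pos (m := m) (Nat.one_le_iff_ne_zero.1 hn)
  have hΩ := omegaTildeGrM_nonneg R
  have hnorm : 0 ≤ normN (evalVecM x R) / rnM m n := div_nonneg (Real.sqrt_nonneg _) hr.le
  exact ⟨((div_le_one hr).1 (by linarith)).trans (rnM_le_one hn), by linarith⟩

end AdditiveClass

end Census

open Census in
/-- Lemma 1, entropy bound.  For every `J ⊆ 𝒥` with `|J| ≤ M = K(K+1)/2`,
the empirical-norm metric entropy of the normalized class
`H(J) = {h ∈ F(J) : ‖h‖ₙ/rₙ + Ω̃_gr(h) ≤ 1}` satisfies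
`H(u, H(J), ‖·‖ₙ) ≤ C u^{-2/m}` for all `u ∈ (0,1)`, with `C` depending only on `m, K`;
equivalently there is a `u`-cover of `H(J)` (in the `‖·‖ₙ` pseudometric, via evaluation
vectors) whose log-cardinality is at most `C u^{-2/m}`. -/
theorem statement5 (m K : ℕ) (hm : 2 ≤ m) (hK : 1 ≤ K) :
    ∃ C : ℝ, 0 < C ∧
      ∀ (n p : ℕ), 1 ≤ n → 1 ≤ p →
      ∀ (x : Fin n → Fin p → ℝ), (∀ i j, x i j ∈ Set.Icc (0:ℝ) 1) →
      ∀ (J : Finset (Fin p × Fin p)), (∀ q ∈ J, q.1 ≤ q.2) →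
        J.card ≤ K * (K + 1) / 2 →
      ∀ (u : ℝ), 0 < u → u < 1 →
        ∃ T : Finset (Fin n → ℝ),
          (∀ R : AddRepM p m, SuppIn R J →
            normN (evalVecM x R) / rnM m n + OmegaTildeGrM R ≤ 1 →
            ∃ t ∈ T, normN (fun i => evalVecM x R i - t i) ≤ u) ∧
          Real.log (T.card : ℝ) ≤ C * u ^ (-(2 : ℝ) / m) := by
  have hconst := entropyConst_pos (m := m) (by omega)
  have hM : 0 < K * (K + 1) / 2 := Nat.div_pos (by nlinarith) two_pos
  refine ⟨entropyConst m * (K * (K + 1) / 2 : ℕ), mul_pos hconst (mod_cast hM), ?_⟩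
  intro n p hn _ x hx J _ hJ u hu hu₁
  obtain ⟨T, hcover, hcard⟩ :=
    exists_finset_evalVecM_cover_log_card_le hm (Nat.one_le_iff_ne_zero.1 hn) hx J hu hu₁.le
  refine ⟨T, fun R hR hnormalized => ?_, hcard.trans ?_⟩
  · obtain ⟨hnorm, hΩ⟩ := normN_le_one_and_omegaTildeGrM_le_one hn hnormalized
    exact hcover R hR hnorm hΩ
  · gcongr
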